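/- arXiv:1508.06123 — 2 statements merged into one kernel-verified Lean document; each statement's English description precedes it below -/
import Mathlib

section
/- Fix k ∈ ℤ. For every continuously differentiable u: ℝ → ℝ satisfying u(x+1) = u(x) − 2πk for all x, with ∫₀¹ sin(u(x)) dx = 0 and ∫₀¹ cos(u(x)) dx < 0, there exists a unique pair (v, n) with n ∈ ℤ and v: ℝ → ℝ continuous, 1-periodic, ∫₀¹ v = kπ and ∫₀¹ exp(2i(∂ₓ⁻¹v)(x)) dx ≠ 0, such that u(x) = 2(∂ₓ⁻¹v)(−x) + c_sg(v) + π + 2πn for all x, where c_sg(v) is taken with arg valued in (−π, π]; moreover v(x) = −u′(−x)/2. Conversely, for every such v the function x ↦ 2(∂ₓ⁻¹v)(−x) + c_sg(v) + π is continuously differentiable of topological charge −k with ∫₀¹ sin = 0 and ∫₀¹ cos < 0. -/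
open MeasureTheory Real intervalIntegral

/-- The mean-zero antiderivative of a (continuous, 1-periodic, mean-zero) function:
`(∂ₓ⁻¹ f)(x) = ∫₀ˣ f(s) ds − ∫₀¹ ∫₀ʸ f(s) ds dy`. -/
noncomputable def pInv (f : ℝ → ℝ) (x : ℝ) : ℝ :=
  (∫ s in (0:ℝ)..x, f s) - ∫ y in (0:ℝ)..1, ∫ s in (0:ℝ)..y, f s

/-- Extension of `∂ₓ⁻¹` to a 1-periodic `v` of mean `a = ∫₀¹ v`:
`(∂ₓ⁻¹ v)(x) = (∂ₓ⁻¹ (v − a))(x) + a·x`. -/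
noncomputable def pInvG (v : ℝ → ℝ) (x : ℝ) : ℝ :=
  pInv (fun s => v s - ∫ t in (0:ℝ)..1, v t) x + (∫ t in (0:ℝ)..1, v t) * x

/-- `K_{sg}(v) = ∫₀¹ exp (2 i (∂ₓ⁻¹ v)(x)) dx`. -/
noncomputable def Ksg (v : ℝ → ℝ) : ℂ :=
  ∫ x in (0:ℝ)..1, Complex.exp (2 * (pInvG v x : ℂ) * Complex.I)

/-- `c_sg(v) = - arg (∫₀¹ exp (2 i (∂ₓ⁻¹ v)(x)) dx)`, with `arg` valued in `(-π, π]`. -/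
noncomputable def cSg (v : ℝ → ℝ) : ℝ := - (Ksg v).arg

/-!
Up to an additive constant `C`, a function `u` of charge `-k` is `2 (∂ₓ⁻¹v)(-x)` with
`v(x) = -u'(-x)/2`. Since `exp (2i ∂ₓ⁻¹v)` is 1-periodic, reflection does not change its integral,
so `∫ exp (iu) = exp (iC) K_sg(v)`. The conditions `∫ sin u = 0` and `∫ cos u < 0` say exactly that
this number has argument `π`, i.e. that `K_sg(v) ≠ 0` and `C ≡ -arg K_sg(v) + π` modulo `2π`.
-/

theorem arg_exp_mul_I_mul_eq_pi_iff (θ : ℝ) (z : ℂ) :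
    (Complex.exp (θ * Complex.I) * z).arg = π ↔ z ≠ 0 ∧ ∃ n : ℤ, θ = -z.arg + π + 2 * π * n := by
  rcases eq_or_ne z 0 with rfl | hz
  · simpa using pi_ne_zero.symm
  · rw [← Real.Angle.toReal_pi, ← Complex.arg_coe_angle_eq_iff_eq_toReal,
      Complex.arg_mul_coe_angle (Complex.exp_ne_zero _) hz, Complex.arg_exp_mul_I,
      Real.Angle.coe_toIocMod, ← Real.Angle.coe_add, Real.Angle.angle_eq_iff_two_pi_dvd_sub]
    simp only [ne_eq, hz, not_false_eq_true, true_and, Real.Angle.toReal_pi]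
    exact exists_congr fun n => ⟨fun h => by linarith, fun h => by linarith⟩

theorem arg_integral_exp_mul_I_eq_pi_iff {w : ℝ → ℝ} {a b : ℝ} {μ : Measure ℝ}
    (hw : IntervalIntegrable (fun x => Complex.exp (w x * Complex.I)) μ a b) :
    (∫ x in a..b, Complex.exp (w x * Complex.I) ∂μ).arg = π ↔
      (∫ x in a..b, sin (w x) ∂μ) = 0 ∧ (∫ x in a..b, cos (w x) ∂μ) < 0 := by
  have hre := intervalIntegral.intervalIntegral_re hw
  have him := intervalIntegral.intervalIntegral_im hw
  simp only [RCLike.re_to_complex, RCLike.im_to_complex, Complex.exp_ofReal_mul_I_re,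
    Complex.exp_ofReal_mul_I_im] at hre him
  rw [Complex.arg_eq_pi_iff, ← hre, ← him, and_comm]

theorem intervalIntegral_comp_neg_of_periodic {E : Type*} [NormedAddCommGroup E] [NormedSpace ℝ E]
    {f : ℝ → E} {T : ℝ} (hf : Function.Periodic f T) :
    ∫ x in (0 : ℝ)..T, f (-x) = ∫ x in (0 : ℝ)..T, f x := by
  simpa using hf.intervalIntegral_add_eq (-T) 0

theorem periodic_deriv_of_add_eq_add_const {𝕜 F : Type*} [NontriviallyNormedField 𝕜]
    [NormedAddCommGroup F] [NormedSpace 𝕜 F] {u : 𝕜 → F} {T : 𝕜} {c : F}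
    (hu : ∀ x, u (x + T) = u x + c) : Function.Periodic (deriv u) T := fun x => by
  rw [← deriv_comp_add_const, funext hu, deriv_add_const]

section Antiderivative

variable {v : ℝ → ℝ}

theorem pInvG_eq_integral_add (hv : ∀ a b, IntervalIntegrable v volume a b) (x : ℝ) :
    pInvG v x = (∫ s in (0 : ℝ)..x, v s) + pInvG v 0 := by
  unfold pInvG pInv
  rw [integral_sub (hv 0 x) intervalIntegrable_const]
  simp only [intervalIntegral.integral_const, integral_same, smul_eq_mul]
  ring

theorem continuous_pInvG (hv : ∀ a b, IntervalIntegrable v volume a b) : Continuous (pInvG v) := by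
  rw [funext (pInvG_eq_integral_add hv)]
  exact (continuous_primitive hv 0).add_const _

theorem hasDerivAt_pInvG (hv : Continuous v) (x : ℝ) : HasDerivAt (pInvG v) (v x) x := by
  rw [funext (pInvG_eq_integral_add hv.intervalIntegrable)]
  exact (hv.integral_hasStrictDerivAt 0 x).hasDerivAt.add_const _

theorem contDiff_one_pInvG (hv : Continuous v) : ContDiff ℝ 1 (pInvG v) := by
  have hderiv : deriv (pInvG v) = v := funext fun x => (hasDerivAt_pInvG hv x).deriv
  exact contDiff_one_iff_deriv.2
    ⟨fun x => (hasDerivAt_pInvG hv x).differentiableAt, by rwa [hderiv]⟩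

theorem pInvG_add_one (hv : ∀ a b, IntervalIntegrable v volume a b) (hp : Function.Periodic v 1)
    (x : ℝ) : pInvG v (x + 1) = pInvG v x + ∫ t in (0 : ℝ)..1, v t := by
  have hint : ∫ s in (0 : ℝ)..x + 1, v s = (∫ s in (0 : ℝ)..x, v s) + ∫ s in (0 : ℝ)..1, v s := by
    simpa only [zero_add] using hp.intervalIntegral_add_eq_add 0 x hv
  rw [pInvG_eq_integral_add hv (x + 1), pInvG_eq_integral_add hv x, hint]
  ring

theorem pInvG_neg_add_one (hv : ∀ a b, IntervalIntegrable v volume a b)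
    (hp : Function.Periodic v 1) (x : ℝ) :
    pInvG v (-(x + 1)) = pInvG v (-x) - ∫ t in (0 : ℝ)..1, v t := by
  rw [eq_sub_iff_add_eq, ← pInvG_add_one hv hp, neg_add_rev, neg_add_cancel_comm]

end Antiderivative

section Phase

variable {v : ℝ → ℝ} {k : ℤ}

theorem periodic_exp_two_mul_pInvG (hv : ∀ a b, IntervalIntegrable v volume a b)
    (hp : Function.Periodic v 1) (hk : ∫ x in (0 : ℝ)..1, v x = k * π) :
    Function.Periodic (fun x => Complex.exp (2 * (pInvG v x : ℂ) * Complex.I)) 1 := fun x =>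
  Complex.exp_eq_exp_iff_exists_int.2 ⟨k, by rw [pInvG_add_one hv hp, hk]; push_cast; ring⟩

theorem integral_exp_two_mul_pInvG_neg_add (hv : ∀ a b, IntervalIntegrable v volume a b)
    (hp : Function.Periodic v 1) (hk : ∫ x in (0 : ℝ)..1, v x = k * π) (C : ℝ) :
    ∫ x in (0 : ℝ)..1, Complex.exp ((2 * pInvG v (-x) + C : ℝ) * Complex.I) =
      Complex.exp (C * Complex.I) * Ksg v := by
  rw [Ksg, ← intervalIntegral_comp_neg_of_periodic (periodic_exp_two_mul_pInvG hv hp hk),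
    ← intervalIntegral.integral_const_mul]
  refine integral_congr fun x _ => ?_
  simp only [← Complex.exp_add]
  push_cast
  ring_nf

theorem integral_sin_eq_zero_and_integral_cos_neg_iff
    (hv : ∀ a b, IntervalIntegrable v volume a b) (hp : Function.Periodic v 1)
    (hk : ∫ x in (0 : ℝ)..1, v x = k * π) (C : ℝ) :
    ((∫ x in (0 : ℝ)..1, sin (2 * pInvG v (-x) + C)) = 0 ∧
        (∫ x in (0 : ℝ)..1, cos (2 * pInvG v (-x) + C)) < 0) ↔
      Ksg v ≠ 0 ∧ ∃ n : ℤ, C = cSg v + π + 2 * π * n := by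
  have hcont := continuous_pInvG hv
  rw [← arg_integral_exp_mul_I_eq_pi_iff (Continuous.intervalIntegrable (by fun_prop) _ _),
    integral_exp_two_mul_pInvG_neg_add hv hp hk, arg_exp_mul_I_mul_eq_pi_iff, cSg]

end Phase

section Inverse

/-- The inverse of the parametrization: the only continuous `v` for which `u` can be of the form
`x ↦ 2 (∂ₓ⁻¹v)(-x) + C`. -/
noncomputable def psiSgInv (u : ℝ → ℝ) : ℝ → ℝ := fun x => -deriv u (-x) / 2

variable {u v : ℝ → ℝ} {C : ℝ}

theorem continuous_psiSgInv (hu : ContDiff ℝ 1 u) : Continuous (psiSgInv u) :=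
  (hu.continuous_deriv_one.comp continuous_neg).neg.div_const 2

theorem periodic_psiSgInv {T c : ℝ} (hs : ∀ x, u (x + T) = u x + c) :
    Function.Periodic (psiSgInv u) T := fun x => by
  simp only [psiSgInv, neg_add, ← sub_eq_add_neg,
    (periodic_deriv_of_add_eq_add_const hs).sub_eq]

theorem integral_psiSgInv (hu : ContDiff ℝ 1 u) (a b : ℝ) :
    ∫ x in a..b, psiSgInv u x = (u (-b) - u (-a)) / 2 := by
  have hderiv : psiSgInv u = fun x => deriv (fun y => u (-y)) x / 2 :=
    funext fun x => by rw [deriv_comp_neg, psiSgInv]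
  have hneg : ContDiff ℝ 1 fun y => u (-y) := hu.comp contDiff_neg
  rw [hderiv, intervalIntegral.integral_div,
    integral_deriv_of_contDiffOn_uIcc hneg.contDiffOn]

theorem integral_psiSgInv_of_add_eq_add_const (hu : ContDiff ℝ 1 u) {T c : ℝ}
    (hs : ∀ x, u (x + T) = u x + c) : ∫ x in (0 : ℝ)..T, psiSgInv u x = -c / 2 := by
  have h := hs (-T)
  rw [neg_add_cancel] at h
  rw [integral_psiSgInv hu, neg_zero, h]
  ring

theorem eq_two_mul_pInvG_psiSgInv_neg_add (hu : ContDiff ℝ 1 u) (x : ℝ) :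
    u x = 2 * pInvG (psiSgInv u) (-x) + (u 0 - 2 * pInvG (psiSgInv u) 0) := by
  rw [pInvG_eq_integral_add (continuous_psiSgInv hu).intervalIntegrable, integral_psiSgInv hu,
    neg_neg, neg_zero]
  ring

theorem eq_psiSgInv_of_eq_two_mul_pInvG_neg_add (hv : Continuous v)
    (h : ∀ x, u x = 2 * pInvG v (-x) + C) : v = psiSgInv u := by
  have hderiv (x : ℝ) : deriv u x = 2 * -v (-x) := by
    rw [funext h, deriv_add_const, deriv_const_mul_field, deriv_comp_neg,
      (hasDerivAt_pInvG hv _).deriv]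
  ext x
  rw [psiSgInv, hderiv, neg_neg]
  ring

theorem psiSgInv_parametrizes {k : ℤ} (hu : ContDiff ℝ 1 u) (hs : ∀ x, u (x + 1) = u x - 2 * π * k)
    (hsin : ∫ x in (0 : ℝ)..1, sin (u x) = 0) (hcos : ∫ x in (0 : ℝ)..1, cos (u x) < 0) :
    Continuous (psiSgInv u) ∧ Function.Periodic (psiSgInv u) 1 ∧
      (∫ x in (0 : ℝ)..1, psiSgInv u x) = k * π ∧ Ksg (psiSgInv u) ≠ 0 ∧
      ∃ n : ℤ, ∀ x,
        u x = 2 * pInvG (psiSgInv u) (-x) + cSg (psiSgInv u) + π + 2 * π * n := by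
  have hv := continuous_psiSgInv hu
  have hs' (x : ℝ) : u (x + 1) = u x + -(2 * π * k) := (hs x).trans (sub_eq_add_neg _ _)
  have hp := periodic_psiSgInv hs'
  have hk : ∫ x in (0 : ℝ)..1, psiSgInv u x = k * π := by
    rw [integral_psiSgInv_of_add_eq_add_const hu hs']
    ring
  have hC := eq_two_mul_pInvG_psiSgInv_neg_add hu
  rw [funext hC] at hsin hcos
  obtain ⟨hK, n, hn⟩ :=
    (integral_sin_eq_zero_and_integral_cos_neg_iff hv.intervalIntegrable hp hk _).1 ⟨hsin, hcos⟩
  exact ⟨hv, hp, hk, hK, n, fun x => by rw [hC x, hn]; ring⟩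

end Inverse

/-- parametrization of the branch `P⁻`: every C¹ function `u` with
`u(x+1) = u(x) − 2πk`, `∫₀¹ sin u = 0` and `∫₀¹ cos u < 0` is uniquely of the form
`u(x) = 2(∂ₓ⁻¹v)(−x) + c_sg(v) + π (mod 2π)` with `v(x) = −u'(−x)/2`, and conversely. -/
theorem psiSgMinus_parametrization (k : ℤ) :
    (∀ u : ℝ → ℝ, ContDiff ℝ 1 u → (∀ x, u (x + 1) = u x - 2 * π * k) →
      (∫ x in (0:ℝ)..1, Real.sin (u x)) = 0 →
      (∫ x in (0:ℝ)..1, Real.cos (u x)) < 0 →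
      (∃! p : (ℝ → ℝ) × ℤ,
        Continuous p.1 ∧ Function.Periodic p.1 1 ∧
        (∫ x in (0:ℝ)..1, p.1 x) = k * π ∧ Ksg p.1 ≠ 0 ∧
        ∀ x, u x = 2 * pInvG p.1 (-x) + cSg p.1 + π + 2 * π * p.2) ∧
      (∀ p : (ℝ → ℝ) × ℤ,
        (Continuous p.1 ∧ Function.Periodic p.1 1 ∧
          (∫ x in (0:ℝ)..1, p.1 x) = k * π ∧ Ksg p.1 ≠ 0 ∧
          ∀ x, u x = 2 * pInvG p.1 (-x) + cSg p.1 + π + 2 * π * p.2) →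
        p.1 = fun x => - deriv u (-x) / 2)) ∧
    (∀ v : ℝ → ℝ, Continuous v → Function.Periodic v 1 →
      (∫ x in (0:ℝ)..1, v x) = k * π → Ksg v ≠ 0 →
      ContDiff ℝ 1 (fun x => 2 * pInvG v (-x) + cSg v + π) ∧
      (∀ x, 2 * pInvG v (-(x + 1)) + cSg v + π
          = (2 * pInvG v (-x) + cSg v + π) + 2 * π * (-k)) ∧
      (∫ x in (0:ℝ)..1, Real.sin (2 * pInvG v (-x) + cSg v + π)) = 0 ∧
      (∫ x in (0:ℝ)..1, Real.cos (2 * pInvG v (-x) + cSg v + π)) < 0) := by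
  refine ⟨fun u hu hs hsin hcos => ?_, fun v hv hp hk hK => ?_⟩
  · have hinv : ∀ v : ℝ → ℝ, ∀ n : ℤ, Continuous v →
        (∀ x, u x = 2 * pInvG v (-x) + cSg v + π + 2 * π * n) → v = psiSgInv u :=
      fun v n hv h => eq_psiSgInv_of_eq_two_mul_pInvG_neg_add hv
        (C := cSg v + π + 2 * π * n) fun x => by rw [h, add_assoc, add_assoc, add_assoc]
    obtain ⟨hv, hp, hk, hK, n, hn⟩ := psiSgInv_parametrizes hu hs hsin hcos
    refine ⟨⟨(psiSgInv u, n), ⟨hv, hp, hk, hK, hn⟩, ?_⟩, fun p hq => hinv p.1 p.2 hq.1 hq.2.2.2.2⟩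
    rintro ⟨w, m⟩ ⟨hw, -, -, -, hm⟩
    obtain rfl := hinv w m hw hm
    have hmn : 2 * π * (m : ℝ) = 2 * π * n := add_left_cancel ((hm 0).symm.trans (hn 0))
    exact Prod.ext rfl (by exact_mod_cast mul_left_cancel₀ two_pi_pos.ne' hmn)
  · have hcont := contDiff_one_pInvG hv
    have hphase := (integral_sin_eq_zero_and_integral_cos_neg_iff hv.intervalIntegrable hp hk
      (cSg v + π)).2 ⟨hK, 0, by simp⟩
    simp only [← add_assoc] at hphase
    refine ⟨by fun_prop, fun x => ?_, hphase⟩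
    rw [pInvG_neg_add_one hv.intervalIntegrable hp, hk]
    ring
end

section
/- Fix k ∈ ℤ and let u₀: ℝ → ℝ be continuously differentiable of topological charge k with ∫₀¹ exp(i u₀(x)) dx = 0 and K₁(u₀) ≠ 0. Then for every T > 0 there exists no function u: ℝ × [0,T) → ℝ such that u and its partial derivatives ∂ₓu, ∂ₜu, ∂ₓ∂ₜu, ∂ₜ∂ₓu exist and are continuous (derivatives in t one-sided at t = 0) with ∂ₓ∂ₜu = ∂ₜ∂ₓu, u(x+1,t) = u(x,t) + 2πk for all x,t, u(x,0) = u₀(x) for all x, and ∂ₓ∂ₜu(x,t) = sin(u(x,t)) for all x,t. -/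
open MeasureTheory Real intervalIntegral

/-- `K₁(u) = ∫₀¹ cos (u x) · (∂ₓ⁻¹ (sin ∘ u))(x) dx`. -/
noncomputable def K1 (u : ℝ → ℝ) : ℝ :=
  ∫ x in (0:ℝ)..1, Real.cos (u x) * pInv (fun y => Real.sin (u y)) x

/-- A classical solution of the sine-Gordon equation of topological charge `k` on
`ℝ × [0,T)`: `u` together with its partial derivatives `∂ₓu`, `∂ₜu`, `∂ₓ∂ₜu`, `∂ₜ∂ₓu`
(the `t`-derivatives taken one-sided at `t = 0`, i.e. within `[0,T)`) exist and are
continuous, the mixed partial derivatives agree, `u(x+1,t) = u(x,t) + 2πk`, and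
`∂ₓ∂ₜu = sin u`. -/
def IsSGSolution (k : ℤ) (T : ℝ) (u : ℝ → ℝ → ℝ) : Prop :=
  ∃ ux ut uxt utx : ℝ → ℝ → ℝ,
    ContinuousOn (fun p : ℝ × ℝ => u p.1 p.2) (Set.univ ×ˢ Set.Ico 0 T) ∧
    (∀ x : ℝ, ∀ t ∈ Set.Ico (0:ℝ) T, HasDerivAt (fun x' => u x' t) (ux x t) x) ∧
    ContinuousOn (fun p : ℝ × ℝ => ux p.1 p.2) (Set.univ ×ˢ Set.Ico 0 T) ∧
    (∀ x : ℝ, ∀ t ∈ Set.Ico (0:ℝ) T,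
      HasDerivWithinAt (fun t' => u x t') (ut x t) (Set.Ico 0 T) t) ∧
    ContinuousOn (fun p : ℝ × ℝ => ut p.1 p.2) (Set.univ ×ˢ Set.Ico 0 T) ∧
    (∀ x : ℝ, ∀ t ∈ Set.Ico (0:ℝ) T, HasDerivAt (fun x' => ut x' t) (uxt x t) x) ∧
    ContinuousOn (fun p : ℝ × ℝ => uxt p.1 p.2) (Set.univ ×ˢ Set.Ico 0 T) ∧
    (∀ x : ℝ, ∀ t ∈ Set.Ico (0:ℝ) T,
      HasDerivWithinAt (fun t' => ux x t') (utx x t) (Set.Ico 0 T) t) ∧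
    ContinuousOn (fun p : ℝ × ℝ => utx p.1 p.2) (Set.univ ×ˢ Set.Ico 0 T) ∧
    (∀ x : ℝ, ∀ t ∈ Set.Ico (0:ℝ) T, uxt x t = utx x t) ∧
    (∀ x : ℝ, ∀ t ∈ Set.Ico (0:ℝ) T, u (x + 1) t = u x t + 2 * π * k) ∧
    (∀ x : ℝ, ∀ t ∈ Set.Ico (0:ℝ) T, uxt x t = Real.sin (u x t))

/-!
The velocity `∂ₜu` is 1-periodic and `∂ₓ(∂ₜu) = sin u`, so `∫ sin u = 0` at every time.
Differentiating this constraint in time gives the hidden constraint `∫ cos u · ∂ₜu = 0`. Since `∂ₜu`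
and `∂ₓ⁻¹ sin u` differ by the mean of `∂ₜu`, it reads `K₁(u) = -(∫ cos u) (∫ ∂ₜu)`. Hence
`K₁(u) = 0` whenever `∫ cos u = 0`.
-/

section ParametricIntegral

variable {𝕜 E : Type*} [RCLike 𝕜] [NormedAddCommGroup E] [NormedSpace ℝ E] [NormedSpace 𝕜 E]

theorem hasDerivWithinAt_integral_of_dominated_of_convex {α : Type*} [MeasurableSpace α]
    {μ : Measure α} {F F' : α → 𝕜 → E} {s : Set 𝕜} {t₀ : 𝕜} {bound : α → ℝ}
    (hs : Convex ℝ s) (ht₀ : t₀ ∈ s) (hF : ∀ t ∈ s, Integrable (F · t) μ)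
    (hbound : Integrable bound μ) (hF'_le : ∀ᵐ a ∂μ, ∀ t ∈ s, ‖F' a t‖ ≤ bound a)
    (hderiv : ∀ᵐ a ∂μ, ∀ t ∈ s, HasDerivWithinAt (F a) (F' a t) s t) :
    HasDerivWithinAt (fun t ↦ ∫ a, F a t ∂μ) (∫ a, F' a t₀ ∂μ) s t₀ := by
  rw [hasDerivWithinAt_iff_tendsto_slope]
  have slope_integral : ∀ᶠ t in nhdsWithin t₀ (s \ {t₀}),
      ∫ a, slope (F a) t₀ t ∂μ = slope (fun t ↦ ∫ a, F a t ∂μ) t₀ t := by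
    filter_upwards [self_mem_nhdsWithin] with t ht
    simp only [slope_def_module]
    rw [MeasureTheory.integral_smul, MeasureTheory.integral_sub (hF t ht.1) (hF t₀ ht₀)]
  refine (tendsto_integral_filter_of_dominated_convergence bound ?_ ?_ hbound ?_).congr'
    slope_integral
  · filter_upwards [self_mem_nhdsWithin] with t ht
    simp only [slope_def_module]
    exact (((hF t ht.1).sub (hF t₀ ht₀)).smul _).aestronglyMeasurable
  · filter_upwards [self_mem_nhdsWithin] with t ht
    filter_upwards [hF'_le, hderiv] with a hle hd
    have mean_value : ‖F a t - F a t₀‖ ≤ bound a * ‖t - t₀‖ :=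
      hs.norm_image_sub_le_of_norm_hasDerivWithin_le hd hle ht₀ ht.1
    rw [slope_def_module, norm_smul, norm_inv, inv_mul_le_iff₀ (norm_sub_pos_iff.2 ht.2), mul_comm]
    exact mean_value
  · filter_upwards [hderiv] with a hd
    exact hasDerivWithinAt_iff_tendsto_slope.1 (hd t₀ ht₀)

theorem hasDerivWithinAt_intervalIntegral_of_continuousOn {f f' : ℝ → 𝕜 → E} {a b : ℝ}
    {s : Set 𝕜} {t₀ : 𝕜} (hs : Convex ℝ s) (hsc : IsCompact s) (ht₀ : t₀ ∈ s)
    (hf : ∀ t ∈ s, ContinuousOn (f · t) (Set.uIcc a b))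
    (hf' : ContinuousOn (fun p : ℝ × 𝕜 ↦ f' p.1 p.2) (Set.uIcc a b ×ˢ s))
    (hderiv : ∀ x ∈ Set.uIcc a b, ∀ t ∈ s, HasDerivWithinAt (f x) (f' x t) s t) :
    HasDerivWithinAt (fun t ↦ ∫ x in a..b, f x t) (∫ x in a..b, f' x t₀) s t₀ := by
  obtain ⟨C, hC⟩ := (isCompact_uIcc.prod hsc).exists_bound_of_continuousOn hf'
  have ae_mem_uIcc : ∀ᵐ x ∂volume.restrict (Set.uIoc a b), x ∈ Set.uIcc a b :=
    (ae_restrict_mem measurableSet_uIoc).mono fun _ ↦ (Set.uIoc_subset_uIcc ·)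
  simp only [intervalIntegral_eq_integral_uIoc]
  refine (hasDerivWithinAt_integral_of_dominated_of_convex (bound := fun _ ↦ C) hs ht₀
    (fun t ht ↦ (hf t ht).intervalIntegrable.def') intervalIntegrable_const.def' ?_ ?_).const_smul _
  · exact ae_mem_uIcc.mono fun x hx t ht ↦ hC (x, t) ⟨hx, ht⟩
  · exact ae_mem_uIcc.mono hderiv

end ParametricIntegral

theorem re_intervalIntegral_exp_mul_I {f : ℝ → ℝ} (hf : Continuous f) (a b : ℝ) :
    (∫ x in a..b, Complex.exp (f x * Complex.I)).re = ∫ x in a..b, cos (f x) := by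
  have hint : IntervalIntegrable (fun x ↦ Complex.exp (f x * Complex.I)) volume a b :=
    Continuous.intervalIntegrable (by fun_prop) a b
  simpa only [Complex.reCLM_apply, Complex.exp_ofReal_mul_I_re] using
    (Complex.reCLM.intervalIntegral_comp_comm hint).symm

theorem pInv_eq_sub_integral {f F : ℝ → ℝ} (hf : Continuous f)
    (hF : ∀ x, HasDerivAt F (f x) x) (x : ℝ) :
    pInv f x = F x - ∫ y in (0 : ℝ)..1, F y := by
  have hFint : IntervalIntegrable F volume 0 1 :=
    (HasDerivAt.continuousOn fun x _ ↦ hF x).intervalIntegrable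
  have ftc (y : ℝ) : ∫ s in (0 : ℝ)..y, f s = F y - F 0 :=
    integral_eq_sub_of_hasDerivAt (fun z _ ↦ hF z) (hf.intervalIntegrable 0 y)
  simp only [pInv, ftc]
  rw [intervalIntegral.integral_sub hFint intervalIntegrable_const,
    intervalIntegral.integral_const, sub_zero, one_smul]
  ring

theorem K1_eq_integral_sub_mul {w v : ℝ → ℝ} (hw : Continuous w)
    (hv : ∀ x, HasDerivAt v (sin (w x)) x) :
    K1 w = (∫ x in (0 : ℝ)..1, cos (w x) * v x)
      - (∫ x in (0 : ℝ)..1, cos (w x)) * ∫ x in (0 : ℝ)..1, v x := by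
  have hvc : Continuous v := continuous_iff_continuousAt.2 fun x ↦ (hv x).continuousAt
  have hsin : Continuous fun x ↦ sin (w x) := continuous_sin.comp hw
  simp only [K1, pInv_eq_sub_integral hsin hv, mul_sub]
  rw [intervalIntegral.integral_sub, intervalIntegral.integral_mul_const]
  · exact Continuous.intervalIntegrable (by fun_prop) 0 1
  · exact Continuous.intervalIntegrable (by fun_prop) 0 1

/-- The time derivative `∂ₜu` on `ℝ × [0,T)`, one-sided at `t = 0`: a canonical choice of the
witness for `∂ₜu` in `IsSGSolution`. -/
noncomputable def timeDeriv (T : ℝ) (u : ℝ → ℝ → ℝ) (x t : ℝ) : ℝ :=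
  derivWithin (u x) (Set.Ico 0 T) t

namespace IsSGSolution

variable {k : ℤ} {T t : ℝ} {u : ℝ → ℝ → ℝ}

theorem continuous_left (hu : IsSGSolution k T u) (ht : t ∈ Set.Ico 0 T) :
    Continuous (u · t) := by
  obtain ⟨ux, -, -, -, -, hux, -⟩ := hu
  exact continuous_iff_continuousAt.2 fun x ↦ (hux x t ht).continuousAt

theorem continuousOn_uncurry (hu : IsSGSolution k T u) :
    ContinuousOn (fun p : ℝ × ℝ ↦ u p.1 p.2) (Set.univ ×ˢ Set.Ico 0 T) := by
  obtain ⟨-, -, -, -, hcont, -⟩ := hu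
  exact hcont

theorem hasDerivWithinAt_timeDeriv (hu : IsSGSolution k T u) (x : ℝ) (ht : t ∈ Set.Ico 0 T) :
    HasDerivWithinAt (u x) (timeDeriv T u x t) (Set.Ico 0 T) t := by
  obtain ⟨-, ut, -, -, -, -, -, hut, -⟩ := hu
  exact (hut x t ht).differentiableWithinAt.hasDerivWithinAt

theorem continuousOn_timeDeriv (hu : IsSGSolution k T u) :
    ContinuousOn (fun p : ℝ × ℝ ↦ timeDeriv T u p.1 p.2) (Set.univ ×ˢ Set.Ico 0 T) := by
  obtain ⟨-, ut, -, -, -, -, -, hut, hutc, -⟩ := hu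
  exact hutc.congr fun p hp ↦ (hut p.1 p.2 hp.2).derivWithin (uniqueDiffOn_Ico 0 T p.2 hp.2)

theorem hasDerivAt_timeDeriv (hu : IsSGSolution k T u) (x : ℝ) (ht : t ∈ Set.Ico 0 T) :
    HasDerivAt (timeDeriv T u · t) (sin (u x t)) x := by
  obtain ⟨-, ut, uxt, -, -, -, -, hut, -, huxt, -, -, -, -, -, heq⟩ := hu
  have timeDeriv_eq : (timeDeriv T u · t) = (ut · t) :=
    funext fun y ↦ (hut y t ht).derivWithin (uniqueDiffOn_Ico 0 T t ht)
  rw [timeDeriv_eq, ← heq x t ht]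
  exact huxt x t ht

theorem timeDeriv_add_one (hu : IsSGSolution k T u) (x : ℝ) (ht : t ∈ Set.Ico 0 T) :
    timeDeriv T u (x + 1) t = timeDeriv T u x t := by
  obtain ⟨-, -, -, -, -, -, -, -, -, -, -, -, -, -, hcharge, -⟩ := hu
  rw [timeDeriv, derivWithin_congr (hcharge x) (hcharge x t ht), derivWithin_add_const, timeDeriv]

theorem integral_sin_eq_zero (hu : IsSGSolution k T u) (ht : t ∈ Set.Ico 0 T) :
    ∫ x in (0 : ℝ)..1, sin (u x t) = 0 := by
  have hperiod : timeDeriv T u 1 t = timeDeriv T u 0 t := by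
    simpa only [zero_add] using hu.timeDeriv_add_one 0 ht
  rw [integral_eq_sub_of_hasDerivAt (fun x _ ↦ hu.hasDerivAt_timeDeriv x ht)
    ((continuous_sin.comp (hu.continuous_left ht)).intervalIntegrable 0 1), hperiod, sub_self]

theorem integral_cos_mul_timeDeriv_eq_zero (hu : IsSGSolution k T u) (ht : t ∈ Set.Ico 0 T) :
    ∫ x in (0 : ℝ)..1, cos (u x t) * timeDeriv T u x t = 0 := by
  obtain ⟨S, htS, hST⟩ := exists_between ht.2
  have hsub : Set.Icc 0 S ⊆ Set.Ico 0 T := Set.Icc_subset_Ico_right hST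
  have htIcc : t ∈ Set.Icc 0 S := ⟨ht.1, htS.le⟩
  have hrect : Set.uIcc (0 : ℝ) 1 ×ˢ Set.Icc 0 S ⊆ Set.univ ×ˢ Set.Ico 0 T :=
    Set.prod_mono (Set.subset_univ _) hsub
  have deriv_integral_sin : HasDerivWithinAt (fun τ ↦ ∫ x in (0 : ℝ)..1, sin (u x τ))
      (∫ x in (0 : ℝ)..1, cos (u x t) * timeDeriv T u x t) (Set.Icc 0 S) t :=
    hasDerivWithinAt_intervalIntegral_of_continuousOn (f := fun x τ ↦ sin (u x τ))
      (f' := fun x τ ↦ cos (u x τ) * timeDeriv T u x τ) (convex_Icc 0 S) isCompact_Icc htIcc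
      (fun τ hτ ↦ (continuous_sin.comp (hu.continuous_left (hsub hτ))).continuousOn)
      ((continuous_cos.comp_continuousOn (hu.continuousOn_uncurry.mono hrect)).mul
        (hu.continuousOn_timeDeriv.mono hrect))
      (fun x _ τ hτ ↦ ((hu.hasDerivWithinAt_timeDeriv x (hsub hτ)).mono hsub).sin)
  have deriv_zero : HasDerivWithinAt (fun τ ↦ ∫ x in (0 : ℝ)..1, sin (u x τ)) 0 (Set.Icc 0 S) t :=
    (hasDerivWithinAt_const t (Set.Icc 0 S) (0 : ℝ)).congr_of_mem
      (fun _ hτ ↦ hu.integral_sin_eq_zero (hsub hτ)) htIcc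
  exact (uniqueDiffOn_Icc (ht.1.trans_lt htS) t htIcc).eq_deriv _ deriv_integral_sin deriv_zero

theorem K1_eq_neg_mul (hu : IsSGSolution k T u) (ht : t ∈ Set.Ico 0 T) :
    K1 (u · t) =
      -((∫ x in (0 : ℝ)..1, cos (u x t)) * ∫ x in (0 : ℝ)..1, timeDeriv T u x t) := by
  rw [K1_eq_integral_sub_mul (hu.continuous_left ht) (hu.hasDerivAt_timeDeriv · ht),
    hu.integral_cos_mul_timeDeriv_eq_zero ht, zero_sub]

end IsSGSolution

theorem no_solution_on_Sing_general {k : ℤ} {T t : ℝ} {u : ℝ → ℝ → ℝ} (ht : t ∈ Set.Ico 0 T)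
    (hcos : ∫ x in (0 : ℝ)..1, cos (u x t) = 0) (hK1 : K1 (u · t) ≠ 0) :
    ¬ IsSGSolution k T u := fun hu ↦ hK1 <| by
  rw [hu.K1_eq_neg_mul ht, hcos, zero_mul, neg_zero]

/-- if `u₀` is C¹ of topological charge `k` with `∫₀¹ exp(i u₀ x) dx = 0`
and `K₁(u₀) ≠ 0`, then for every `T > 0` there is no classical charge-`k` solution of
sine-Gordon on `ℝ × [0,T)` with initial datum `u₀`. -/
theorem no_solution_on_Sing (k : ℤ) (u₀ : ℝ → ℝ)
    (hu₀ : ContDiff ℝ 1 u₀)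
    (hch : ∀ x, u₀ (x + 1) = u₀ x + 2 * π * k)
    (hK : (∫ x in (0:ℝ)..1, Complex.exp ((u₀ x : ℂ) * Complex.I)) = 0)
    (hK1 : K1 u₀ ≠ 0) :
    ∀ T : ℝ, 0 < T → ¬ ∃ u : ℝ → ℝ → ℝ, IsSGSolution k T u ∧ ∀ x, u x 0 = u₀ x := by
  rintro T hT ⟨u, hu, hu0⟩
  obtain rfl : (u · 0) = u₀ := funext hu0
  have hcos : ∫ x in (0 : ℝ)..1, cos (u x 0) = 0 := by
    rw [← re_intervalIntegral_exp_mul_I hu₀.continuous, hK, Complex.zero_re]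
  exact no_solution_on_Sing_general ⟨le_rfl, hT⟩ hcos hK1 hu
end
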